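/- Let ξ be irrational and I ⊂ ℝ/ℤ an interval. Then for any two points x, x′ ∈ ℝ/ℤ, the discrepancy D(N; I, x) is bounded in N if and only if D(N; I, x′) is bounded in N. -/

import Mathlib

open scoped Classical

/-- The local discrepancy of the orbit `x, x+ξ, ..., x+Nξ` (mod ℤ) with respect to
the interval `[a,b) ⊆ [0,1)` (viewed as an interval in ℝ/ℤ). -/
noncomputable def localDisc (ξ x a b : ℝ) (N : ℕ) : ℝ :=
  (((Finset.range (N + 1)).filter
      (fun n => Int.fract (x + n * ξ) ∈ Set.Ico a b)).card : ℝ) - N * (b - a)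

/-!
Up to a constant, `D(N; I, x)` is a Birkhoff sum over the rotation by `ξ` of the right-continuous
function `1_I - |I|`. If the Birkhoff sums at `x` are bounded by `C`, then those at any point of
the orbit of `x` are bounded by `2C`, being differences of two Birkhoff sums at `x`. The orbit is
dense, so every `x'` is a limit from the right of orbit points, and each Birkhoff sum, as a finite
sum of right-continuous functions, inherits the bound `2C` at `x'`.
-/

open Filter Function Set Topology

section RightContinuity

variable {X Y : Type*} [LinearOrder X] [TopologicalSpace X] [TopologicalSpace Y]

theorem continuousWithinAt_Ici_indicator_Ico [OrderTopology X] [Zero Y] (a b : X) (c : Y) (x : X) :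
    ContinuousWithinAt ((Ico a b).indicator fun _ ↦ c) (Ici x) x := by
  have eventually_mem_iff : ∀ᶠ y in 𝓝[≥] x, (y ∈ Ico a b ↔ x ∈ Ico a b) := by
    rcases lt_or_ge x a with hxa | hax
    · filter_upwards [Ico_mem_nhdsGE hxa] with y hy
      simp only [mem_Ico, hxa.not_ge, hy.2.not_ge, false_and]
    rcases lt_or_ge x b with hxb | hbx
    · filter_upwards [Ico_mem_nhdsGE hxb] with y hy
      simp only [mem_Ico, hax, hax.trans hy.1, hxb, hy.2]
    · filter_upwards [self_mem_nhdsWithin] with y hy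
      simp only [mem_Ico, hbx.not_gt, (hbx.trans hy).not_gt, and_false]
  have eventually_eq : (Ico a b).indicator (fun _ ↦ c) =ᶠ[𝓝[≥] x]
      fun _ ↦ (Ico a b).indicator (fun _ ↦ c) x := by
    filter_upwards [eventually_mem_iff] with y hy
    simp only [indicator_apply, hy]
  exact continuousWithinAt_const.congr_of_eventuallyEq eventually_eq rfl

theorem mem_of_dense_of_continuousWithinAt_Ici [OrderTopology X] [DenselyOrdered X] [NoMaxOrder X]
    {F : X → Y} {s : Set X} {K : Set Y} {x : X} (hs : Dense s) (hK : IsClosed K)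
    (hF : ContinuousWithinAt F (Ici x) x) (hsK : MapsTo F s K) : F x ∈ K := by
  have hx : x ∈ closure (Ioi x ∩ s) :=
    closure_minimal (hs.open_subset_closure_inter isOpen_Ioi) isClosed_closure
      (closure_Ioi x ▸ self_mem_Ici)
  have hF' : ContinuousWithinAt F (Ioi x ∩ s) x :=
    hF.mono (inter_subset_left.trans Ioi_subset_Ici_self)
  exact hK.closure_eq ▸ hF'.mem_closure hx fun y hy ↦ hsK hy.2

theorem continuousWithinAt_Ici_comp_fract {f : ℝ → Y} {x : ℝ}
    (hf : ContinuousWithinAt f (Ici (Int.fract x)) (Int.fract x)) :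
    ContinuousWithinAt (fun y ↦ f (Int.fract y)) (Ici x) x := by
  have hfract : ContinuousWithinAt Int.fract (Ico x (⌊x⌋ + 1)) x :=
    (continuousOn_fract ⌊x⌋ x ⟨Int.floor_le x, Int.lt_floor_add_one x⟩).mono
      (Ico_subset_Ico_left (Int.floor_le x))
  have hmaps : MapsTo Int.fract (Ico x (⌊x⌋ + 1)) (Ici (Int.fract x)) := fun y hy ↦ by
    have hfloor : ⌊y⌋ = ⌊x⌋ := Int.floor_eq_iff.2 ⟨(Int.floor_le x).trans hy.1, hy.2⟩
    rw [mem_Ici, Int.fract, Int.fract, hfloor]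
    exact sub_le_sub_right hy.1 _
  exact (hf.comp hfract hmaps).mono_of_mem_nhdsWithin (Ico_mem_nhdsGE (Int.lt_floor_add_one x))

end RightContinuity

section BirkhoffSum

variable {E : Type*} [SeminormedAddCommGroup E] {p ξ C : ℝ} {f : ℝ → E}

theorem norm_birkhoffSum_iterate_le {α : Type*} {T : α → α} {g : α → E} {x : α}
    (hC : ∀ n, ‖birkhoffSum T g n x‖ ≤ C) (m n : ℕ) :
    ‖birkhoffSum T g n (T^[m] x)‖ ≤ 2 * C := by
  calc ‖birkhoffSum T g n (T^[m] x)‖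
      = ‖birkhoffSum T g (m + n) x - birkhoffSum T g m x‖ := by
        rw [birkhoffSum_add, add_sub_cancel_left]
    _ ≤ C + C := norm_sub_le_of_le (hC _) (hC _)
    _ = 2 * C := (two_mul C).symm

theorem periodic_birkhoffSum_add_right (hf : Periodic f p) (n : ℕ) :
    Periodic (birkhoffSum (· + ξ) f n) p := fun x ↦
  Finset.sum_congr rfl fun k _ ↦ by
    simp only [add_right_iterate, add_right_comm x p, hf _]

theorem continuousWithinAt_Ici_birkhoffSum_add_right
    (hf : ∀ x, ContinuousWithinAt f (Ici x) x) (n : ℕ) (x : ℝ) :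
    ContinuousWithinAt (birkhoffSum (· + ξ) f n) (Ici x) x := by
  refine tendsto_finsetSum _ fun k _ ↦ ?_
  simp only [add_right_iterate]
  exact (hf (x + k • ξ)).comp (f := (· + k • ξ)) (by fun_prop) fun y hy ↦
    add_le_add_left (mem_Ici.1 hy) _

theorem denseRange_coe_add_nsmul [Fact (0 < p)] (hξ : Irrational (ξ / p)) (x : ℝ) :
    DenseRange fun m : ℕ ↦ ((x + m • ξ : ℝ) : AddCircle p) := by
  have hmultiples : DenseRange fun m : ℕ ↦ m • (ξ : AddCircle p) :=
    denseRange_zsmul_iff_nsmul.1 (AddCircle.denseRange_zsmul_coe_iff.2 hξ)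
  exact (Homeomorph.addLeft (x : AddCircle p)).surjective.denseRange.comp hmultiples
    (Homeomorph.addLeft _).continuous

theorem norm_birkhoffSum_add_right_le [Fact (0 < p)] (hξ : Irrational (ξ / p))
    (hper : Periodic f p) (hf : ∀ x, ContinuousWithinAt f (Ici x) x) {x : ℝ}
    (hC : ∀ n, ‖birkhoffSum (· + ξ) f n x‖ ≤ C) (n : ℕ) (x' : ℝ) :
    ‖birkhoffSum (· + ξ) f n x'‖ ≤ 2 * C := by
  have hdense : Dense (((↑) : ℝ → AddCircle p) ⁻¹' range fun m : ℕ ↦ ↑(x + m • ξ)) :=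
    (denseRange_coe_add_nsmul hξ x).preimage QuotientAddGroup.isOpenMap_coe
  refine mem_of_dense_of_continuousWithinAt_Ici (F := fun y ↦ ‖birkhoffSum (· + ξ) f n y‖)
    (K := Iic (2 * C)) hdense isClosed_Iic
    (continuousWithinAt_Ici_birkhoffSum_add_right hf n x').norm ?_
  rintro y ⟨m, hm⟩
  have hsum : birkhoffSum (· + ξ) f n (x + m • ξ) = birkhoffSum (· + ξ) f n y :=
    congrArg (periodic_birkhoffSum_add_right hper n).lift hm
  change ‖birkhoffSum (· + ξ) f n y‖ ≤ 2 * C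
  rw [← hsum, ← add_right_iterate_apply]
  exact norm_birkhoffSum_iterate_le hC m n

theorem bounded_birkhoffSum_add_right_iff [Fact (0 < p)] (hξ : Irrational (ξ / p))
    (hper : Periodic f p) (hf : ∀ x, ContinuousWithinAt f (Ici x) x) (x x' : ℝ) :
    (∃ C, ∀ n, ‖birkhoffSum (· + ξ) f n x‖ ≤ C) ↔
      ∃ C, ∀ n, ‖birkhoffSum (· + ξ) f n x'‖ ≤ C :=
  ⟨fun ⟨_, hC⟩ ↦ ⟨_, fun n ↦ norm_birkhoffSum_add_right_le hξ hper hf hC n x'⟩,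
    fun ⟨_, hC⟩ ↦ ⟨_, fun n ↦ norm_birkhoffSum_add_right_le hξ hper hf hC n x⟩⟩

end BirkhoffSum

/-- The function `1_I - |I|` on `ℝ/ℤ` for `I = [a, b)`, lifted to `ℝ`; its Birkhoff sums over the
rotation by `ξ` are the local discrepancies, up to a constant. -/
noncomputable def centeredIndicator (a b y : ℝ) : ℝ :=
  (Ico a b).indicator (fun _ ↦ 1) (Int.fract y) - (b - a)

theorem periodic_centeredIndicator (a b : ℝ) : Periodic (centeredIndicator a b) 1 := fun y ↦ by
  rw [centeredIndicator, Int.fract_add_one, centeredIndicator]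

theorem continuousWithinAt_Ici_centeredIndicator (a b y : ℝ) :
    ContinuousWithinAt (centeredIndicator a b) (Ici y) y :=
  (continuousWithinAt_Ici_comp_fract (continuousWithinAt_Ici_indicator_Ico a b 1 _)).sub
    continuousWithinAt_const

-- In `localDisc` the filter condition is over `ℝ`: the summation range is silently the image of
-- `Finset.range (N + 1)` under the injective cast `ℕ → ℝ`.
theorem localDisc_eq_sum_indicator (ξ x a b : ℝ) (N : ℕ) :
    localDisc ξ x a b N =
      ∑ n ∈ Finset.range (N + 1), (Ico a b).indicator (fun _ ↦ 1) (Int.fract (x + (n : ℕ) * ξ))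
        - N * (b - a) := by
  have hrange : (do let n ← Finset.range (N + 1); pure (n : ℝ) : Finset ℝ) =
      (Finset.range (N + 1)).image Nat.cast := by
    rw [bind_pure_comp, Finset.fmap_def]
  rw [localDisc, hrange, Finset.filter_image, Finset.card_image_of_injective _ Nat.cast_injective]
  simp only [indicator_apply, Finset.sum_boole]

theorem localDisc_eq_birkhoffSum (ξ x a b : ℝ) (N : ℕ) :
    localDisc ξ x a b N =
      birkhoffSum (· + ξ) (centeredIndicator a b) (N + 1) x + (b - a) := by
  rw [localDisc_eq_sum_indicator]
  simp only [birkhoffSum, centeredIndicator, add_right_iterate, nsmul_eq_mul,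
    Finset.sum_sub_distrib, Finset.sum_const, Finset.card_range, Nat.cast_succ]
  ring

theorem bounded_localDisc_iff_bounded_birkhoffSum (ξ x a b : ℝ) :
    (∃ C, ∀ N, |localDisc ξ x a b N| ≤ C) ↔
      ∃ C, ∀ n, ‖birkhoffSum (· + ξ) (centeredIndicator a b) n x‖ ≤ C := by
  simp only [localDisc_eq_birkhoffSum, ← Real.norm_eq_abs]
  constructor
  · rintro ⟨C, hC⟩
    refine ⟨C + ‖b - a‖, fun n ↦ ?_⟩
    rcases n with _ | N
    · rw [birkhoffSum_zero, norm_zero]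
      exact add_nonneg ((norm_nonneg _).trans (hC 0)) (norm_nonneg _)
    · exact (norm_le_add_norm_add _ (b - a)).trans (add_le_add_left (hC N) _)
  · rintro ⟨C, hC⟩
    exact ⟨C + ‖b - a‖, fun N ↦ norm_add_le_of_le (hC (N + 1)) le_rfl⟩

/-- Boundedness of the local discrepancy does not depend on the starting point:
for any `x, x'`, `D(N; I, x)` is bounded in `N` iff `D(N; I, x')` is. -/
theorem disc_bounded_independent_of_basepoint (ξ a b : ℝ) (hξ : Irrational ξ)
    (ha : 0 ≤ a) (hab : a ≤ b) (hb : b ≤ 1) (x x' : ℝ) :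
    (∃ C : ℝ, ∀ N : ℕ, |localDisc ξ x a b N| ≤ C) ↔
      (∃ C : ℝ, ∀ N : ℕ, |localDisc ξ x' a b N| ≤ C) := by
  have hξ' : Irrational (ξ / 1) := by rwa [div_one]
  rw [bounded_localDisc_iff_bounded_birkhoffSum, bounded_localDisc_iff_bounded_birkhoffSum]
  exact bounded_birkhoffSum_add_right_iff hξ' (periodic_centeredIndicator a b)
    (continuousWithinAt_Ici_centeredIndicator a b) x x'
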